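/- Up to graph isomorphism there is at most one bipartite graph G = (A, B, E) such that the multiset of degrees of the vertices of A is {5,5,5,4,4}, the multiset of degrees of the vertices of B is {5,4,4,4,3,3}, and every degree-5 vertex of A is adjacent to both degree-3 vertices of B and to exactly two of the three degree-4 vertices of B; that is, any two bipartite graphs satisfying these conditions are isomorphic. -/

import Mathlib

/-!
Write `a₅, a₄` for the vertices of `A` of degree 5, 4 and `b₅, b₄, b₃` for those of `B` of
degree 5, 4, 3. The hypotheses force almost every adjacency: `b₅` sees all five vertices of `A`;
each `b₃` sees the three `a₅` and hence, having degree 3, no `a₄`; so each `a₄` sees `b₅` and all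
`b₄`. Counting degrees, between the three `a₅` and the three `b₄` every vertex has exactly two
neighbours, so there the graph is `K₃,₃` minus a perfect matching. Numbering the `b₄` along that
matching identifies `G` with one fixed graph, given by the bipartite adjacency table `table`.

`exists_labelling` numbers a part of the graph compatibly with its degrees, `exists_perm_table` is
the combinatorial argument above for 0-1 matrices, and `exists_equiv_table` combines the two into an
identification of `G` with the fixed graph.
-/

/-- Index set of `A`: the three vertices of degree 5 and the two of degree 4. -/
abbrev IA := Fin 3 ⊕ Fin 2

/-- Index set of `B`: the vertex of degree 5, the three of degree 4 and the two of degree 3. -/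
abbrev IB := Unit ⊕ (Fin 3 ⊕ Fin 2)

/-- The prescribed degrees on `A`. -/
def degA : IA → ℕ := Sum.elim (fun _ => 5) (fun _ => 4)

/-- The prescribed degrees on `B`. -/
def degB : IB → ℕ := Sum.elim (fun _ => 5) (Sum.elim (fun _ => 4) (fun _ => 3))

/-- The bipartite adjacency table of the unique graph: the non-edges between the parts are a perfect
matching between the degree-5 vertices of `A` and the degree-4 vertices of `B`, and all pairs
consisting of a degree-4 vertex of `A` and a degree-3 vertex of `B`. -/
def table : IA → IB → Bool
  | .inl i, .inr (.inl j) => decide (i ≠ j)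
  | .inr _, .inr (.inr _) => false
  | _, _ => true

/-- Adjacency in the fixed graph on `IA ⊕ IB` with bipartite adjacency table `table`. -/
def tableAdj : IA ⊕ IB → IA ⊕ IB → Prop
  | .inl x, .inr y => table x y = true
  | .inr y, .inl x => table x y = true
  | _, _ => False

/-- If `f` on `s` and `d` on `ι` take the same values with the same multiplicities, then `s` can be
enumerated by `ι` so that `f` becomes `d`: match up the fibres, which have equal sizes. -/
lemma exists_labelling {V ι : Type} [Fintype ι] [DecidableEq ι] [DecidableEq V]
    (s : Finset V) (f : V → ℕ) (d : ι → ℕ)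
    (h : Multiset.map f s.val = Multiset.map d Finset.univ.val) :
    ∃ a : ι → V, Function.Injective a ∧ (∀ v, v ∈ s ↔ ∃ i, a i = v) ∧ ∀ i, f (a i) = d i := by
  have hfib : ∀ n, Nonempty ({i // d i = n} ≃ {v : s // f v = n}) := by
    intro n
    have hn := congrArg (Multiset.count n) h
    rw [Multiset.count_map, Multiset.count_map] at hn
    refine ⟨Fintype.equivOfCardEq ?_⟩
    have h1 : Fintype.card {i // d i = n} = (Finset.univ.filter fun i => n = d i).card := by
      rw [Fintype.card_subtype]
      simp only [eq_comm]
    have h2 : Fintype.card {v : s // f v = n} = (s.filter fun v => n = f v).card := by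
      rw [← Fintype.card_coe]
      refine Fintype.card_congr ((Equiv.subtypeSubtypeEquivSubtypeInter (· ∈ s) (f · = n)).trans
        (Equiv.subtypeEquivRight fun v => ?_))
      simp [eq_comm]
    rw [h1, h2]
    exact hn.symm
  let E := fun n => (hfib n).some
  let e : ι ≃ s := (Equiv.sigmaFiberEquiv d).symm.trans
    ((Equiv.sigmaCongrRight E).trans (Equiv.sigmaFiberEquiv fun v : s => f v))
  refine ⟨fun i => e i, ?_, ?_, ?_⟩
  · intro i j hij
    exact e.injective (Subtype.ext hij)
  · intro v
    constructor
    · intro hv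
      exact ⟨e.symm ⟨v, hv⟩, by simp⟩
    · rintro ⟨i, rfl⟩
      exact (e _).2
  · intro i
    exact (E (d i) ⟨i, rfl⟩).2

/-- A 3×3 0-1 matrix with all row and column sums 2 is, up to a column permutation, the complement
of the identity matrix. -/
lemma exists_perm_three (N : Fin 3 → Fin 3 → Bool)
    (hr : ∀ i, ∑ j, (N i j).toNat = 2) (hc : ∀ j, ∑ i, (N i j).toNat = 2) :
    ∃ σ : Equiv.Perm (Fin 3), ∀ i j, N i (σ j) = decide (i ≠ j) := by
  -- The column of the unique zero of row `i` is the image of `i`.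
  have h1 : ∀ i, ∃ k, ∀ j, N i j = decide (k ≠ j) := by
    intro i
    have := hr i
    generalize N i = r at this
    revert r
    decide
  choose s hs using h1
  have hinj : Function.Injective s := by
    simp only [hs] at hc
    clear hs hr
    revert s
    decide
  refine ⟨Equiv.ofBijective s (Finite.injective_iff_bijective.1 hinj), fun i j => ?_⟩
  simp [hs, hinj.eq_iff]

/-- Degree counting: a 0-1 matrix with the prescribed row and column sums, in which the degree-5
rows meet the degree-3 columns in ones, is `table` up to permuting the degree-4 columns. -/
lemma exists_perm_table (M : IA → IB → Bool)
    (hr : ∀ x, ∑ y, (M x y).toNat = degA x) (hc : ∀ y, ∑ x, (M x y).toNat = degB y)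
    (hd : ∀ i k, M (.inl i) (.inr (.inr k)) = true) :
    ∃ σ : Equiv.Perm IB, ∀ x y, M x (σ y) = table x y := by
  have key : ∀ b : Bool, b.toNat = 1 ↔ b = true := by decide
  have le := fun x y => Bool.toNat_le (M x y)
  have h0 : ∀ x, M x (.inl ()) = true := by
    have h := hc (.inl ())
    simp only [Fintype.sum_sum_type, Fin.sum_univ_three, Fin.sum_univ_two, degB, Sum.elim_inl] at h
    have l0 := le (.inl 0) (.inl ())
    have l1 := le (.inl 1) (.inl ())
    have l2 := le (.inl 2) (.inl ())
    have l3 := le (.inr 0) (.inl ())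
    have l4 := le (.inr 1) (.inl ())
    rintro (i | i) <;> fin_cases i <;> rw [← key] <;> dsimp at * <;> omega
  have h1 : ∀ i k, M (.inr i) (.inr (.inr k)) = false := by
    intro i k
    have h := hc (.inr (.inr k))
    simp [Fintype.sum_sum_type, degB, hd] at h
    fin_cases i <;> simp [h]
  have h2 : ∀ i j, M (.inr i) (.inr (.inl j)) = true := by
    intro i j
    have h := hr (.inr i)
    simp only [Fintype.sum_sum_type, Fin.sum_univ_three, Fin.sum_univ_two, degA, Sum.elim_inr,
      Finset.univ_unique, Finset.sum_singleton, h0, h1, Bool.toNat_true, Bool.toNat_false,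
      PUnit.default_eq_unit] at h
    have l0 := le (.inr i) (.inr (.inl 0))
    have l1 := le (.inr i) (.inr (.inl 1))
    have l2 := le (.inr i) (.inr (.inl 2))
    fin_cases j <;> rw [← key] <;> dsimp at * <;> omega
  obtain ⟨σ, hσ⟩ := exists_perm_three (fun i j => M (.inl i) (.inr (.inl j)))
    (by
      intro i
      have h := hr (.inl i)
      simp [Fintype.sum_sum_type, degA, h0, hd] at h
      omega)
    (by
      intro j
      have h := hc (.inr (.inl j))
      simp [Fintype.sum_sum_type, degB, h2] at h
      omega)
  refine ⟨Equiv.sumCongr (Equiv.refl _) (Equiv.sumCongr σ (Equiv.refl _)), ?_⟩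
  rintro (i | i) (u | j | k)
  · simp [table, h0]
  · simpa [table] using hσ i j
  · simp [table, hd]
  · simp [table, h0]
  · simp [table, h2]
  · simp [table, h1]

lemma exists_equiv_table {V : Type} [Fintype V] [DecidableEq V]
    (G : SimpleGraph V) [DecidableRel G.Adj] (A B : Finset V)
    (hdisj : Disjoint A B) (hcover : A ∪ B = Finset.univ)
    (hbip : ∀ u v : V, G.Adj u v → (u ∈ A ∧ v ∈ B) ∨ (u ∈ B ∧ v ∈ A))
    (hA : Multiset.map (fun v => G.degree v) A.val = {5,5,5,4,4})
    (hB : Multiset.map (fun v => G.degree v) B.val = {5,4,4,4,3,3})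
    (hadj : ∀ a ∈ A, G.degree a = 5 → ∀ b ∈ B, G.degree b = 3 → G.Adj a b) :
    ∃ e : IA ⊕ IB ≃ V, ∀ p q, G.Adj (e p) (e q) ↔ tableAdj p q := by
  obtain ⟨a, ainj, amem, adeg⟩ := exists_labelling A (fun v => G.degree v) degA
    (by rw [hA]; decide)
  obtain ⟨b, binj, bmem, bdeg⟩ := exists_labelling B (fun v => G.degree v) degB
    (by rw [hB]; decide)
  have haA : ∀ x, a x ∈ A := fun x => (amem _).2 ⟨x, rfl⟩
  have hbB : ∀ y, b y ∈ B := fun y => (bmem _).2 ⟨y, rfl⟩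
  have hnA : ∀ v ∈ A, v ∉ B := fun v h h' => Finset.disjoint_left.1 hdisj h h'
  have hrow : ∀ x, ∑ y, (decide (G.Adj (a x) (b y))).toNat = degA x := by
    intro x
    have h : G.neighborFinset (a x)
        = (Finset.univ.filter fun y => G.Adj (a x) (b y)).map ⟨b, binj⟩ := by
      ext v
      simp only [SimpleGraph.mem_neighborFinset, Finset.mem_map, Finset.mem_filter,
        Finset.mem_univ, true_and, Function.Embedding.coeFn_mk]
      constructor
      · intro hv
        rcases hbip _ _ hv with ⟨_, h⟩ | ⟨h, _⟩
        · obtain ⟨y, rfl⟩ := (bmem _).1 h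
          exact ⟨y, hv, rfl⟩
        · exact absurd h (hnA _ (haA x))
      · rintro ⟨y, hy, rfl⟩
        exact hy
    rw [← adeg x, ← SimpleGraph.card_neighborFinset_eq_degree, h, Finset.card_map,
      Finset.card_filter]
    exact Finset.sum_congr rfl fun y _ => by by_cases h : G.Adj (a x) (b y) <;> simp [h]
  have hcol : ∀ y, ∑ x, (decide (G.Adj (a x) (b y))).toNat = degB y := by
    intro y
    have h : G.neighborFinset (b y)
        = (Finset.univ.filter fun x => G.Adj (a x) (b y)).map ⟨a, ainj⟩ := by
      ext v
      simp only [SimpleGraph.mem_neighborFinset, Finset.mem_map, Finset.mem_filter,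
        Finset.mem_univ, true_and, Function.Embedding.coeFn_mk]
      constructor
      · intro hv
        rcases hbip _ _ hv with ⟨h, _⟩ | ⟨_, h⟩
        · exact absurd (hbB y) (hnA _ h)
        · obtain ⟨x, rfl⟩ := (amem _).1 h
          exact ⟨x, hv.symm, rfl⟩
      · rintro ⟨x, hx, rfl⟩
        exact hx.symm
    rw [← bdeg y, ← SimpleGraph.card_neighborFinset_eq_degree, h, Finset.card_map,
      Finset.card_filter]
    exact Finset.sum_congr rfl fun x _ => by by_cases h : G.Adj (a x) (b y) <;> simp [h]
  obtain ⟨σ, hσ⟩ := exists_perm_table (fun x y => decide (G.Adj (a x) (b y))) hrow hcol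
    (fun i k => decide_eq_true
      (hadj _ (haA _) (adeg (.inl i)) _ (hbB _) (bdeg (.inr (.inr k)))))
  have hbij : Function.Bijective (Sum.elim a (b ∘ σ)) := by
    constructor
    · refine ainj.sumElim (binj.comp σ.injective) ?_
      intro x y h
      exact hnA _ (haA x) (h ▸ hbB _)
    · intro v
      have hv : v ∈ A ∪ B := hcover ▸ Finset.mem_univ v
      rcases Finset.mem_union.1 hv with h | h
      · obtain ⟨x, rfl⟩ := (amem _).1 h
        exact ⟨.inl x, rfl⟩
      · obtain ⟨y, rfl⟩ := (bmem _).1 h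
        exact ⟨.inr (σ.symm y), by simp⟩
  refine ⟨Equiv.ofBijective _ hbij, ?_⟩
  rintro (x | y) (x' | y')
  · simp only [Equiv.ofBijective_apply, Sum.elim_inl, tableAdj, iff_false]
    intro h
    rcases hbip _ _ h with ⟨_, h⟩ | ⟨h, _⟩ <;> exact hnA _ (haA _) h
  · simp [tableAdj, ← hσ]
  · simp [tableAdj, ← hσ, G.adj_comm]
  · simp only [Equiv.ofBijective_apply, Sum.elim_inr, tableAdj, iff_false]
    intro h
    rcases hbip _ _ h with ⟨h, _⟩ | ⟨_, h⟩ <;> exact hnA _ h (hbB _)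

/-- Up to isomorphism there is at most one bipartite graph with part degree multisets
`{5,5,5,4,4}` and `{5,4,4,4,3,3}` in which every degree-5 vertex of `A` is adjacent
to both degree-3 vertices of `B` and to exactly two of the three degree-4 vertices
of `B`. -/
theorem stmt_12 {V V' : Type} [Fintype V] [DecidableEq V] [Fintype V'] [DecidableEq V']
    (G : SimpleGraph V) [DecidableRel G.Adj]
    (G' : SimpleGraph V') [DecidableRel G'.Adj]
    (A B : Finset V) (A' B' : Finset V')
    (hdisj : Disjoint A B) (hcover : A ∪ B = Finset.univ)
    (hbip : ∀ u v : V, G.Adj u v → (u ∈ A ∧ v ∈ B) ∨ (u ∈ B ∧ v ∈ A))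
    (hA : Multiset.map (fun v => G.degree v) A.val = {5,5,5,4,4})
    (hB : Multiset.map (fun v => G.degree v) B.val = {5,4,4,4,3,3})
    (hadj : ∀ a ∈ A, G.degree a = 5 →
      (∀ b ∈ B, G.degree b = 3 → G.Adj a b) ∧
      (B.filter (fun b => G.degree b = 4 ∧ G.Adj a b)).card = 2)
    (hdisj' : Disjoint A' B') (hcover' : A' ∪ B' = Finset.univ)
    (hbip' : ∀ u v : V', G'.Adj u v → (u ∈ A' ∧ v ∈ B') ∨ (u ∈ B' ∧ v ∈ A'))
    (hA' : Multiset.map (fun v => G'.degree v) A'.val = {5,5,5,4,4})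
    (hB' : Multiset.map (fun v => G'.degree v) B'.val = {5,4,4,4,3,3})
    (hadj' : ∀ a ∈ A', G'.degree a = 5 →
      (∀ b ∈ B', G'.degree b = 3 → G'.Adj a b) ∧
      (B'.filter (fun b => G'.degree b = 4 ∧ G'.Adj a b)).card = 2) :
    Nonempty (G ≃g G') := by
  obtain ⟨e, he⟩ := exists_equiv_table G A B hdisj hcover hbip hA hB
    fun a ha h => (hadj a ha h).1
  obtain ⟨e', he'⟩ := exists_equiv_table G' A' B' hdisj' hcover' hbip' hA' hB'
    fun a ha h => (hadj' a ha h).1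
  refine ⟨⟨e.symm.trans e', fun {u v} => ?_⟩⟩
  have h := he (e.symm u) (e.symm v)
  simp only [Equiv.apply_symm_apply] at h
  simp only [Equiv.trans_apply, he', h]
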